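/- Soundness and completeness of DL with respect to the model-theoretic semantics: for every propositional defeasible theory T and every conclusion c, T ⊢ c if and only if c holds in every defeasible model of T. -/

import Mathlib

/-- A literal is an atom or its negation. -/
inductive Lit (Atom : Type) where
  | pos : Atom → Lit Atom
  | neg : Atom → Lit Atom
  deriving DecidableEq

/-- The complement `~q` of a literal `q`. -/
def Lit.compl {Atom : Type} : Lit Atom → Lit Atom
  | .pos a => .neg a
  | .neg a => .pos a

/-- The three kinds of rules: strict, defeasible, defeater. -/
inductive RuleKind where
  | strict
  | defeasible
  | defeater
  deriving DecidableEq

/-- A rule: a kind, a finite set of literals as body (antecedent), and a head literal. -/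
structure DRule (Atom : Type) where
  kind : RuleKind
  body : Finset (Lit Atom)
  head : Lit Atom
  deriving DecidableEq

/-- A rule is strict-or-defeasible (a "supportive" rule). -/
def DRule.isSd {Atom : Type} (r : DRule Atom) : Prop :=
  r.kind = RuleKind.strict ∨ r.kind = RuleKind.defeasible

/-- A propositional defeasible theory: finite set of facts, finite set of rules,
and a superiority relation on rules. -/
structure DTheory (Atom : Type) where
  facts : Finset (Lit Atom)
  rules : Finset (DRule Atom)
  sup : DRule Atom → DRule Atom → Prop

/-- Acyclicity of the superiority relation. -/
def SupAcyclic {Atom : Type} (T : DTheory Atom) : Prop :=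
  ∀ r : DRule Atom, ¬ Relation.TransGen T.sup r r

/-- Conclusions: tagged literals +Δq, -Δq, +∂q, -∂q. -/
inductive Concl (Atom : Type) where
  | plusDelta : Lit Atom → Concl Atom
  | minusDelta : Lit Atom → Concl Atom
  | plusPartial : Lit Atom → Concl Atom
  | minusPartial : Lit Atom → Concl Atom
  deriving DecidableEq

/-- The inference rules of DL: `Licensed T prev c` holds when the conclusion `c`
may be appended to a derivation whose preceding part is `prev`. -/
def Licensed {Atom : Type} (T : DTheory Atom)
    (prev : List (Concl Atom)) : Concl Atom → Prop
  | .plusDelta q =>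
      q ∈ T.facts ∨
      ∃ r ∈ T.rules, r.kind = RuleKind.strict ∧ r.head = q ∧
        ∀ a ∈ r.body, Concl.plusDelta a ∈ prev
  | .minusDelta q =>
      q ∉ T.facts ∧
      ∀ r ∈ T.rules, r.kind = RuleKind.strict → r.head = q →
        ∃ a ∈ r.body, Concl.minusDelta a ∈ prev
  | .plusPartial q =>
      (Concl.plusDelta q ∈ prev) ∨
      ((∃ r ∈ T.rules, r.isSd ∧ r.head = q ∧
          ∀ a ∈ r.body, Concl.plusPartial a ∈ prev) ∧
       (Concl.minusDelta q.compl ∈ prev) ∧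
       ∀ s ∈ T.rules, s.head = q.compl →
         ((∃ a ∈ s.body, Concl.minusPartial a ∈ prev) ∨
          (∃ t ∈ T.rules, t.isSd ∧ t.head = q ∧ T.sup t s ∧
            ∀ a ∈ t.body, Concl.plusPartial a ∈ prev)))
  | .minusPartial q =>
      (Concl.minusDelta q ∈ prev) ∧
      ((∀ r ∈ T.rules, r.isSd → r.head = q →
          ∃ a ∈ r.body, Concl.minusPartial a ∈ prev) ∨
       (Concl.plusDelta q.compl ∈ prev) ∨
       (∃ s ∈ T.rules, s.head = q.compl ∧
          (∀ a ∈ s.body, Concl.plusPartial a ∈ prev) ∧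
          ∀ t ∈ T.rules, t.isSd → t.head = q →
            ((∃ a ∈ t.body, Concl.minusPartial a ∈ prev) ∨ ¬ T.sup t s)))

/-- A derivation: each element of the sequence is licensed given the preceding part. -/
def DLDerivation {Atom : Type} (T : DTheory Atom)
    (P : List (Concl Atom)) : Prop :=
  ∀ i : Fin P.length, Licensed T (P.take i) (P.get i)

/-- `T ⊢ c`: some derivation in `T` ends with conclusion `c`. -/
def DLProves {Atom : Type} (T : DTheory Atom) (c : Concl Atom) : Prop :=
  ∃ P : List (Concl Atom), DLDerivation T P ∧ P.getLast? = some c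

/-- A defeasible interpretation: two partial functions from literals to booleans
(modelled as `Option Bool`-valued functions), `del` for definite knowledge (Δ) and
`par` for defeasible belief (∂). -/
structure DInterp (Atom : Type) where
  del : Lit Atom → Option Bool
  par : Lit Atom → Option Bool

/-- The coherence conditions on defeasible interpretations: what is known is believed,
and what is not believed is not known. -/
def DInterp.Coherent {Atom : Type} (I : DInterp Atom) : Prop :=
  (∀ q : Lit Atom, I.del q = some true → I.par q = some true) ∧
  (∀ q : Lit Atom, I.par q = some false → I.del q = some false)

open Classical in
/-- Kleene conjunction of a partial boolean function over a finite set of literals: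
`False` if some member maps to `False`, `True` if every member maps to `True`,
undefined otherwise. -/
noncomputable def kleeneAll {Atom : Type} (f : Lit Atom → Option Bool)
    (S : Finset (Lit Atom)) : Option Bool :=
  if ∃ a ∈ S, f a = some false then some false
  else if ∀ a ∈ S, f a = some true then some true
  else none

/-- The four model conditions (MΔ+), (MΔ-), (M∂+), (M∂-). -/
def ModelConditions {Atom : Type} (T : DTheory Atom)
    (I : DInterp Atom) : Prop :=
  (∀ q : Lit Atom,
    I.del q = some true ↔
      (q ∈ T.facts ∨
       ∃ r ∈ T.rules, r.kind = RuleKind.strict ∧ r.head = q ∧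
         kleeneAll I.del r.body = some true)) ∧
  (∀ q : Lit Atom,
    I.del q = some false ↔
      (q ∉ T.facts ∧
       ∀ r ∈ T.rules, r.kind = RuleKind.strict → r.head = q →
         kleeneAll I.del r.body = some false)) ∧
  (∀ q : Lit Atom,
    I.par q = some true ↔
      (I.del q = some true ∨
       ((∃ r ∈ T.rules, r.isSd ∧ r.head = q ∧ kleeneAll I.par r.body = some true) ∧
        I.del q.compl = some false ∧
        ∀ s ∈ T.rules, s.head = q.compl →
          (kleeneAll I.par s.body = some false ∨
           ∃ t ∈ T.rules, t.isSd ∧ t.head = q ∧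
             kleeneAll I.par t.body = some true ∧ T.sup t s)))) ∧
  (∀ q : Lit Atom,
    I.par q = some false ↔
      (I.del q = some false ∧
       ((∀ r ∈ T.rules, r.isSd → r.head = q → kleeneAll I.par r.body = some false) ∨
        I.del q.compl = some true ∨
        (∃ s ∈ T.rules, s.head = q.compl ∧ kleeneAll I.par s.body = some true ∧
          ∀ t ∈ T.rules, t.isSd → t.head = q →
            (kleeneAll I.par t.body = some false ∨ ¬ T.sup t s)))))

/-- A defeasible model of `T`: a defeasible interpretation (coherent pair of partial
functions) satisfying the four model conditions. -/
def IsModel {Atom : Type} (T : DTheory Atom) (I : DInterp Atom) : Prop :=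
  I.Coherent ∧ ModelConditions T I

/-- A conclusion holds in an interpretation. -/
def DLHolds {Atom : Type} (I : DInterp Atom) : Concl Atom → Prop
  | .plusDelta q => I.del q = some true
  | .minusDelta q => I.del q = some false
  | .plusPartial q => I.par q = some true
  | .minusPartial q => I.par q = some false



/-- `Licensed` with an arbitrary predicate of available conclusions. -/
def Lic {Atom : Type} (T : DTheory Atom)
    (S : Concl Atom → Prop) : Concl Atom → Prop
  | .plusDelta q =>
      q ∈ T.facts ∨
      ∃ r ∈ T.rules, r.kind = RuleKind.strict ∧ r.head = q ∧
        ∀ a ∈ r.body, S (Concl.plusDelta a)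
  | .minusDelta q =>
      q ∉ T.facts ∧
      ∀ r ∈ T.rules, r.kind = RuleKind.strict → r.head = q →
        ∃ a ∈ r.body, S (Concl.minusDelta a)
  | .plusPartial q =>
      (S (Concl.plusDelta q)) ∨
      ((∃ r ∈ T.rules, r.isSd ∧ r.head = q ∧
          ∀ a ∈ r.body, S (Concl.plusPartial a)) ∧
       (S (Concl.minusDelta q.compl)) ∧
       ∀ s ∈ T.rules, s.head = q.compl →
         ((∃ a ∈ s.body, S (Concl.minusPartial a)) ∨
          (∃ t ∈ T.rules, t.isSd ∧ t.head = q ∧ T.sup t s ∧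
            ∀ a ∈ t.body, S (Concl.plusPartial a))))
  | .minusPartial q =>
      (S (Concl.minusDelta q)) ∧
      ((∀ r ∈ T.rules, r.isSd → r.head = q →
          ∃ a ∈ r.body, S (Concl.minusPartial a)) ∨
       (S (Concl.plusDelta q.compl)) ∨
       (∃ s ∈ T.rules, s.head = q.compl ∧
          (∀ a ∈ s.body, S (Concl.plusPartial a)) ∧
          ∀ t ∈ T.rules, t.isSd → t.head = q →
            ((∃ a ∈ t.body, S (Concl.minusPartial a)) ∨ ¬ T.sup t s)))

theorem licensed_iff {Atom : Type} (T : DTheory Atom) (P : List (Concl Atom))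
    (c : Concl Atom) : Licensed T P c ↔ Lic T (fun x => x ∈ P) c := by
  cases c <;> rfl

/-- The literal underlying a conclusion. -/
def Concl.lit {Atom : Type} : Concl Atom → Lit Atom
  | .plusDelta q => q
  | .minusDelta q => q
  | .plusPartial q => q
  | .minusPartial q => q

/-- The literals relevant for licensing a conclusion. -/
def relevant {Atom : Type} (T : DTheory Atom) (c : Concl Atom) : Set (Lit Atom) :=
  {q | q = c.lit ∨ q = c.lit.compl ∨ ∃ r ∈ T.rules, q ∈ r.body}

theorem relevant_finite {Atom : Type} (T : DTheory Atom) (c : Concl Atom) :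
    (relevant T c).Finite := by
  have h : relevant T c = {c.lit} ∪ ({c.lit.compl} ∪ ⋃ r ∈ T.rules, (r.body : Set (Lit Atom))) := by
    ext q
    simp [relevant]
    tauto
  rw [h]
  refine (Set.finite_singleton _).union ((Set.finite_singleton _).union ?_)
  exact Set.Finite.biUnion T.rules.finite_toSet (fun r _ => r.body.finite_toSet)

theorem Lic.mono_rel {Atom : Type} {T : DTheory Atom} {S S' : Concl Atom → Prop}
    {c : Concl Atom} (h : ∀ x : Concl Atom, x.lit ∈ relevant T c → S x → S' x)
    (hc : Lic T S c) : Lic T S' c := by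
  have hb : ∀ r ∈ T.rules, ∀ a ∈ r.body, a ∈ relevant T c :=
    fun r hr a ha => Or.inr (Or.inr ⟨r, hr, ha⟩)
  have h0 : c.lit ∈ relevant T c := Or.inl rfl
  have h1 : c.lit.compl ∈ relevant T c := Or.inr (Or.inl rfl)
  have hall : ∀ (tag : Lit Atom → Concl Atom), (∀ q, (tag q).lit = q) → ∀ r ∈ T.rules,
      (∀ a ∈ r.body, S (tag a)) → ∀ a ∈ r.body, S' (tag a) :=
    fun tag ht r hr hs a ha => h _ (by rw [ht]; exact hb r hr a ha) (hs a ha)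
  have hex : ∀ (tag : Lit Atom → Concl Atom), (∀ q, (tag q).lit = q) → ∀ r ∈ T.rules,
      (∃ a ∈ r.body, S (tag a)) → ∃ a ∈ r.body, S' (tag a) :=
    fun tag ht r hr ⟨a, ha, hs⟩ => ⟨a, ha, h _ (by rw [ht]; exact hb r hr a ha) hs⟩
  cases c with
  | plusDelta q =>
    rcases hc with hf | ⟨r, hr, hk, hh, ha⟩
    · exact Or.inl hf
    · exact Or.inr ⟨r, hr, hk, hh, hall .plusDelta (fun _ => rfl) r hr ha⟩
  | minusDelta q =>
    exact ⟨hc.1, fun r hr hk hh => hex .minusDelta (fun _ => rfl) r hr (hc.2 r hr hk hh)⟩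
  | plusPartial q =>
    rcases hc with hf | ⟨⟨r, hr, hk, hh, ha⟩, hd, hs⟩
    · exact Or.inl (h _ h0 hf)
    · refine Or.inr ⟨⟨r, hr, hk, hh, hall .plusPartial (fun _ => rfl) r hr ha⟩, h _ h1 hd, ?_⟩
      intro s hsr hsh
      rcases hs s hsr hsh with he | ⟨t, ht, h2, h3, h4, h5⟩
      · exact Or.inl (hex .minusPartial (fun _ => rfl) s hsr he)
      · exact Or.inr ⟨t, ht, h2, h3, h4, hall .plusPartial (fun _ => rfl) t ht h5⟩
  | minusPartial q =>
    refine ⟨h _ h0 hc.1, ?_⟩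
    rcases hc.2 with ha | hd | ⟨s, hs, hh, hb', ht⟩
    · exact Or.inl fun r hr hk hh => hex .minusPartial (fun _ => rfl) r hr (ha r hr hk hh)
    · exact Or.inr (Or.inl (h _ h1 hd))
    · refine Or.inr (Or.inr ⟨s, hs, hh, hall .plusPartial (fun _ => rfl) s hs hb', ?_⟩)
      intro t htr hk hth
      exact (ht t htr hk hth).imp_left (hex .minusPartial (fun _ => rfl) t htr)

theorem Lic.mono {Atom : Type} {T : DTheory Atom} {S S' : Concl Atom → Prop}
    {c : Concl Atom} (h : ∀ x : Concl Atom, S x → S' x)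
    (hc : Lic T S c) : Lic T S' c := hc.mono_rel fun x _ => h x

theorem der_snoc {Atom : Type} {T : DTheory Atom} {P : List (Concl Atom)} {c : Concl Atom} :
    DLDerivation T (P ++ [c]) ↔ DLDerivation T P ∧ Lic T (fun x => x ∈ P) c := by
  unfold DLDerivation
  constructor
  · intro h
    constructor
    · intro i
      have := h ⟨i, by simp⟩
      simpa [List.take_append_of_le_length i.2.le, List.getElem_append_left] using this
    · have := h ⟨P.length, by simp⟩
      rw [← licensed_iff]
      simpa using this
  · rintro ⟨h, hc⟩ ⟨i, hi⟩
    rcases Nat.lt_or_ge i P.length with hlt | hge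
    · have := h ⟨i, hlt⟩
      simpa [List.take_append_of_le_length hlt.le, List.getElem_append_left, hlt] using this
    · have : i = P.length := by simp at hi; omega
      subst this
      rw [← licensed_iff] at hc
      simpa using hc

theorem der_nil {Atom : Type} {T : DTheory Atom} : DLDerivation T [] := fun i => i.elim0

theorem der_append {Atom : Type} {T : DTheory Atom} {P Q : List (Concl Atom)}
    (hP : DLDerivation T P) (hQ : DLDerivation T Q) : DLDerivation T (P ++ Q) := by
  induction Q using List.reverseRecOn with
  | nil => simpa using hP
  | append_singleton Q c ih =>
    rw [der_snoc] at hQ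
    rw [← List.append_assoc, der_snoc]
    exact ⟨ih hQ.1, hQ.2.mono fun x hx => List.mem_append_right _ hx⟩

/-- Induction principle on derivations. -/
theorem der_ind {Atom : Type} {T : DTheory Atom} {M : Concl Atom → Prop}
    (hM : ∀ c, Lic T M c → M c) {P : List (Concl Atom)} (hP : DLDerivation T P) :
    ∀ c ∈ P, M c := by
  induction P using List.reverseRecOn with
  | nil => simp
  | append_singleton P c ih =>
    rw [der_snoc] at hP
    intro x hx
    rcases List.mem_append.1 hx with hx | hx
    · exact ih hP.1 x hx
    · rw [List.mem_singleton.1 hx]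
      exact hM c (hP.2.mono (ih hP.1))

theorem der_lic {Atom : Type} {T : DTheory Atom} {P : List (Concl Atom)}
    (hP : DLDerivation T P) : ∀ c ∈ P, Lic T (fun x => x ∈ P) c := by
  induction P using List.reverseRecOn with
  | nil => simp
  | append_singleton P c ih =>
    rw [der_snoc] at hP
    intro x hx
    have hm : ∀ x, x ∈ P → x ∈ P ++ [c] := fun x hx => List.mem_append_left _ hx
    rcases List.mem_append.1 hx with hx | hx
    · exact (ih hP.1 x hx).mono hm
    · rw [List.mem_singleton.1 hx]
      exact hP.2.mono hm

theorem proves_iff {Atom : Type} {T : DTheory Atom} {c : Concl Atom} :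
    DLProves T c ↔ ∃ P, DLDerivation T P ∧ c ∈ P := by
  constructor
  · rintro ⟨P, hP, hc⟩
    exact ⟨P, hP, List.mem_of_getLast? hc⟩
  · rintro ⟨P, hP, hc⟩
    exact ⟨P ++ [c], der_snoc.2 ⟨hP, der_lic hP c hc⟩, by simp⟩

theorem proves_finite {Atom : Type} {T : DTheory Atom} {L : Set (Concl Atom)}
    (hL : L.Finite) : ∃ P, DLDerivation T P ∧ ∀ c ∈ L, DLProves T c → c ∈ P := by
  induction L, hL using Set.Finite.induction_on with
  | empty => exact ⟨[], der_nil, by simp⟩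
  | @insert c L _ _ ih =>
    obtain ⟨P, hP, h⟩ := ih
    by_cases hc : DLProves T c
    · obtain ⟨Q, hQ, hcQ⟩ := proves_iff.1 hc
      refine ⟨P ++ Q, der_append hP hQ, ?_⟩
      rintro x (rfl | hx) hp
      · exact List.mem_append_right _ hcQ
      · exact List.mem_append_left _ (h x hx hp)
    · refine ⟨P, hP, ?_⟩
      rintro x (rfl | hx) hp
      · exact absurd hp hc
      · exact h x hx hp

theorem proves_lic {Atom : Type} {T : DTheory Atom} {c : Concl Atom} :
    DLProves T c ↔ Lic T (DLProves T) c := by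
  constructor
  · intro h
    obtain ⟨P, hP, hc⟩ := proves_iff.1 h
    exact (der_lic hP c hc).mono fun x hx => proves_iff.2 ⟨P, hP, hx⟩
  · intro h
    have hfin : {x : Concl Atom | x.lit ∈ relevant T c}.Finite := by
      have hr := relevant_finite T c
      refine (((hr.image Concl.plusDelta).union (hr.image Concl.minusDelta)).union
        ((hr.image Concl.plusPartial).union (hr.image Concl.minusPartial))).subset ?_
      intro x hx
      cases x <;> simpa [Concl.lit] using hx
    obtain ⟨P, hP, hm⟩ := proves_finite (T := T) hfin
    exact ⟨P ++ [c], der_snoc.2 ⟨hP, h.mono_rel hm⟩, by simp⟩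

/-- The opposite conclusion. -/
def Concl.opp {Atom : Type} : Concl Atom → Concl Atom
  | .plusDelta q => .minusDelta q
  | .minusDelta q => .plusDelta q
  | .plusPartial q => .minusPartial q
  | .minusPartial q => .plusPartial q

theorem lic_consistent {Atom : Type} {T : DTheory Atom} {S : Concl Atom → Prop}
    (hS : ∀ x, S x → S x.opp → False) (c : Concl Atom)
    (h1 : Lic T S c) (h2 : Lic T S c.opp) : False := by
  have hD : ∀ q, Lic T S (.plusDelta q) → Lic T S (.minusDelta q) → False := by
    rintro q (hf | ⟨r, hr, hk, hh, ha⟩) ⟨hn, hm⟩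
    · exact hn hf
    · obtain ⟨a, har, hma⟩ := hm r hr hk hh
      exact hS _ (ha a har) hma
  have hP : ∀ q, S (.plusDelta q) → S (.minusDelta q) → False := fun q => hS (.plusDelta q)
  have hQ : ∀ q, S (.plusPartial q) → S (.minusPartial q) → False := fun q => hS (.plusPartial q)
  have hp : ∀ q, Lic T S (.plusPartial q) → Lic T S (.minusPartial q) → False := by
    rintro q (hf | ⟨⟨r, hr, hk, hh, ha⟩, hd, hs⟩) ⟨hn, hm⟩
    · exact hP q hf hn
    · rcases hm with hm | hm | ⟨s, hsr, hsh, hsb, ht⟩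
      · obtain ⟨a, har, hma⟩ := hm r hr hk hh
        exact hQ _ (ha a har) hma
      · exact hP _ hm hd
      · rcases hs s hsr hsh with ⟨a, hab, hma⟩ | ⟨t, htr, htk, hth, hts, htb⟩
        · exact hQ _ (hsb a hab) hma
        · rcases ht t htr htk hth with ⟨a, hab, hma⟩ | hnot
          · exact hQ _ (htb a hab) hma
          · exact hnot hts
  cases c with
  | plusDelta q => exact hD q h1 h2
  | minusDelta q => exact hD q h2 h1
  | plusPartial q => exact hp q h1 h2
  | minusPartial q => exact hp q h2 h1

theorem opp_ne {Atom : Type} (c : Concl Atom) : c.opp ≠ c := by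
  cases c <;> simp [Concl.opp]

theorem opp_opp {Atom : Type} (c : Concl Atom) : c.opp.opp = c := by
  cases c <;> rfl

theorem der_consistent {Atom : Type} {T : DTheory Atom} {P : List (Concl Atom)}
    (hP : DLDerivation T P) : ∀ x, x ∈ P → x.opp ∈ P → False := by
  induction P using List.reverseRecOn with
  | nil => simp
  | append_singleton P c ih =>
    rw [der_snoc] at hP
    have hl := der_lic hP.1
    have hall : ∀ x ∈ P ++ [c], Lic T (fun x => x ∈ P) x := by
      intro x hx
      rcases List.mem_append.1 hx with hx | hx
      · exact hl x hx
      · rw [List.mem_singleton.1 hx]; exact hP.2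
    intro x h1 h2
    exact lic_consistent (ih hP.1) x (hall x h1) (hall _ h2)

theorem proves_consistent {Atom : Type} {T : DTheory Atom} (c : Concl Atom)
    (h1 : DLProves T c) (h2 : DLProves T c.opp) : False := by
  obtain ⟨P, hP, hc⟩ := proves_iff.1 h1
  obtain ⟨Q, hQ, hc'⟩ := proves_iff.1 h2
  exact der_consistent (der_append hP hQ) c (List.mem_append_left _ hc)
    (List.mem_append_right _ hc')

theorem kleene_true {Atom : Type} (f : Lit Atom → Option Bool) (S : Finset (Lit Atom)) :
    kleeneAll f S = some true ↔ ∀ a ∈ S, f a = some true := by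
  unfold kleeneAll
  split_ifs with h1 h2
  · obtain ⟨a, ha, hf⟩ := h1
    refine iff_of_false (by simp) fun h => ?_
    have := h a ha
    simp [hf] at this
  · exact iff_of_true rfl h2
  · exact iff_of_false (by simp) h2

theorem kleene_false {Atom : Type} (f : Lit Atom → Option Bool) (S : Finset (Lit Atom)) :
    kleeneAll f S = some false ↔ ∃ a ∈ S, f a = some false := by
  unfold kleeneAll
  split_ifs with h1 h2
  · exact iff_of_true rfl h1
  · exact iff_of_false (by simp) h1
  · exact iff_of_false (by simp) h1

theorem model_iff {Atom : Type} (T : DTheory Atom) (I : DInterp Atom) :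
    ModelConditions T I ↔ ∀ c, DLHolds I c ↔ Lic T (DLHolds I) c := by
  simp only [ModelConditions, kleene_true, kleene_false]
  constructor
  · rintro ⟨h1, h2, h3, h4⟩ c
    cases c with
    | plusDelta q => exact h1 q
    | minusDelta q => exact h2 q
    | plusPartial q =>
      refine (h3 q).trans ?_
      simp only [Lic, DLHolds, and_comm]
    | minusPartial q => exact h4 q
  · intro h
    refine ⟨fun q => h (.plusDelta q), fun q => h (.minusDelta q), fun q => ?_,
      fun q => h (.minusPartial q)⟩
    refine (h (.plusPartial q)).trans ?_
    simp only [Lic, DLHolds, and_comm]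

open Classical in
/-- The canonical model. -/
noncomputable def canon {Atom : Type} (T : DTheory Atom) : DInterp Atom where
  del q := if DLProves T (.plusDelta q) then some true
    else if DLProves T (.minusDelta q) then some false else none
  par q := if DLProves T (.plusPartial q) then some true
    else if DLProves T (.minusPartial q) then some false else none

theorem canon_holds {Atom : Type} (T : DTheory Atom) (c : Concl Atom) :
    DLHolds (canon T) c ↔ DLProves T c := by
  have hc := proves_consistent (T := T) c
  cases c <;> simp only [DLHolds, canon, Concl.opp] at * <;> split_ifs <;> simp_all

theorem canon_model {Atom : Type} (T : DTheory Atom) : IsModel T (canon T) := by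
  refine ⟨⟨fun q h => ?_, fun q h => ?_⟩, ?_⟩
  · have h' := (canon_holds T (.plusDelta q)).1 h
    exact (canon_holds T (.plusPartial q)).2 (proves_lic.2 (Or.inl h'))
  · have h' := (canon_holds T (.minusPartial q)).1 h
    exact (canon_holds T (.minusDelta q)).2 (proves_lic.1 h').1
  · rw [model_iff]
    have : DLHolds (canon T) = DLProves T := funext fun c => propext (canon_holds T c)
    rw [this]
    exact fun c => proves_lic

/-- Soundness and completeness of DL with respect to the model-theoretic semantics. -/
theorem DL_sound_complete {Atom : Type} [Countable Atom] [DecidableEq Atom]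
    (T : DTheory Atom) (hacyc : SupAcyclic T) (c : Concl Atom) :
    DLProves T c ↔ ∀ I : DInterp Atom, IsModel T I → DLHolds I c := by
  constructor
  · intro h I hI
    obtain ⟨P, hP, hc⟩ := proves_iff.1 h
    exact der_ind (fun c hc => ((model_iff T I).1 hI.2 c).2 hc) hP c hc
  · intro h
    exact (canon_holds T c).1 (h _ (canon_model T))
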